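/- arXiv:1303.5473 — 2 statements merged into one kernel-verified Lean document; each statement's English description precedes it below -/
import Mathlib

section
/- Let P be a finite set of points in the plane in general position. Then the θ₄-graph of P is a geometric spanner with stretch factor at most (1+√2)·(√2+36)·√(4+2√2) (≈ 237): for all points s, t ∈ P there exists a path from s to t in the θ₄-graph of P whose length is at most (1+√2)·(√2+36)·√(4+2√2)·‖s−t‖₂. -/
open scoped BigOperators

/-- Euclidean distance between two points of the plane. -/
noncomputable def dist2 (p q : ℝ × ℝ) : ℝ := Real.sqrt ((p.1 - q.1) ^ 2 + (p.2 - q.2) ^ 2)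

/-- `L₁` distance between two points of the plane. -/
def dist1 (p q : ℝ × ℝ) : ℝ := |p.1 - q.1| + |p.2 - q.2|

/-- `L∞` distance between two points of the plane (half the side of `S_t(s)`). -/
def distInf (p q : ℝ × ℝ) : ℝ := max |p.1 - q.1| |p.2 - q.2|

/-- `cone i p q` : the point `q` lies in the open cone (quadrant) `C_i(p)`. -/
def cone (i : ℕ) (p q : ℝ × ℝ) : Prop :=
  if i = 0 then p.1 < q.1 ∧ q.2 < p.2
  else if i = 1 then p.1 < q.1 ∧ p.2 < q.2
  else if i = 2 then q.1 < p.1 ∧ p.2 < q.2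
  else q.1 < p.1 ∧ q.2 < p.2

/-- General position: no two points of `P` on a common vertical line, horizontal line,
or line of slope `+1` or `-1`. -/
def GenPos (P : Finset (ℝ × ℝ)) : Prop :=
  ∀ p ∈ P, ∀ q ∈ P, p ≠ q →
    p.1 ≠ q.1 ∧ p.2 ≠ q.2 ∧ p.2 - p.1 ≠ q.2 - q.1 ∧ p.2 + p.1 ≠ q.2 + q.1

/-- `IsNbr P i p q` : `q = n_i(p)`, i.e. `q` is a point of `P` in `C_i(p)` minimizing
the `L₁`-distance to `p`. -/
def IsNbr (P : Finset (ℝ × ℝ)) (i : ℕ) (p q : ℝ × ℝ) : Prop :=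
  q ∈ P ∧ cone i p q ∧ ∀ r ∈ P, cone i p r → dist1 p q ≤ dist1 p r

/-- Adjacency in the θ₄-graph of `P`. -/
def Theta4Adj (P : Finset (ℝ × ℝ)) (p q : ℝ × ℝ) : Prop :=
  p ∈ P ∧ q ∈ P ∧ ∃ i < 4, (IsNbr P i p q ∨ IsNbr P i q p)

/-- A walk with `k` edges in the θ₄-graph of `P`, given by its vertices `v 0, …, v k`. -/
def IsTheta4Path (P : Finset (ℝ × ℝ)) (k : ℕ) (v : ℕ → ℝ × ℝ) : Prop :=
  v 0 ∈ P ∧ ∀ j < k, Theta4Adj P (v j) (v (j + 1))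

/-- The Euclidean length of a path with `k` edges. -/
noncomputable def pathLength (k : ℕ) (v : ℕ → ℝ × ℝ) : ℝ :=
  ∑ j ∈ Finset.range k, dist2 (v j) (v (j + 1))

/-- `p` is `t`-protected: no point of `P` lying in `C₁(p)` is on or below the line `ℓ⁻_t`
of slope `-1` through `t`. -/
def TProtected (P : Finset (ℝ × ℝ)) (t p : ℝ × ℝ) : Prop :=
  ∀ q ∈ P, cone 1 p q → t.1 + t.2 < q.1 + q.2

/-!
Fix the target `t` and write `‖p‖₁`, `‖p‖∞` for the distances from `p` to `t`. After reversing and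
exchanging axes, the current vertex `z` lies in the octant `X ≤ Y < 0` of coordinates centred at
`t`. A staircase of edges, along which `X` increases and `Y` decreases, first leads to a *saturated*
vertex: every point of the octant with a larger `X` lies in its cone `C₁`. From a saturated `z`,
follow the edge to `q = n₁(z)`. While `q` stays in the quadrant, sweep to a saturated vertex again;
the decrease of `‖z‖₁ + 2‖z‖∞` pays for the edge and the staircase. Let `τ(r)` be the largest `‖p‖₁`
among the points of an octant with `‖p‖∞ ≤ r`. Whenever the walk crosses the diagonal, minimality of
`q` bounds `τ` for the octant it leaves by the old `τ` for the octant it enters; when `q` leaves the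
quadrant, minimality bounds `τ(‖q‖∞)` for the last octant by `‖q‖∞`.

Hence the decrease of `4‖z‖∞ - ‖z‖₁ + 2 ∑ τ(‖z‖∞)`, the sum being over the eight octants, pays for a
whole visit to a quadrant. As `τ(r) ≤ 2r`, this potential is at most `36‖s‖∞ - ‖s‖₁ ≤ 35‖s‖∞` at the
source `s`.
-/

variable {P : Finset (ℝ × ℝ)} {p q r s t w z : ℝ × ℝ} {X Y : ℝ × ℝ → ℝ} {c d ρ : ℝ}

theorem finset_induction_on_lt {α β : Type*} [Preorder β] {P : Finset α} (f : α → β)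
    {Q : ∀ a ∈ P, Prop} (step : ∀ a ha, (∀ b hb, f b < f a → Q b hb) → Q a ha) (a : α)
    (ha : a ∈ P) : Q a ha :=
  have : IsStrictOrder α (fun b a => f b < f a) :=
    { irrefl := fun _ => lt_irrefl _, trans := fun _ _ _ => lt_trans }
  (P.finite_toSet.wellFoundedOn (r := fun b a => f b < f a)).induction
    (P := fun a => ∀ ha, Q a ha) ha (fun a _ ih ha => step a ha fun b hb hba => ih b hb hba hb) ha

/-! ### Distances -/

theorem dist1_nonneg (p q : ℝ × ℝ) : 0 ≤ dist1 p q :=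
  add_nonneg (abs_nonneg _) (abs_nonneg _)

theorem dist1_self (p : ℝ × ℝ) : dist1 p p = 0 := by
  simp [dist1]

theorem distInf_self (p : ℝ × ℝ) : distInf p p = 0 := by
  simp [distInf]

theorem distInf_nonneg (p q : ℝ × ℝ) : 0 ≤ distInf p q :=
  (abs_nonneg _).trans (le_max_left _ _)

theorem distInf_le_dist1 (p q : ℝ × ℝ) : distInf p q ≤ dist1 p q :=
  max_le_add_of_nonneg (abs_nonneg _) (abs_nonneg _)

theorem dist1_le_two_mul_distInf (p q : ℝ × ℝ) : dist1 p q ≤ 2 * distInf p q := by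
  rw [two_mul]
  exact add_le_add (le_max_left _ _) (le_max_right _ _)

theorem dist2_le_dist1 (p q : ℝ × ℝ) : dist2 p q ≤ dist1 p q :=
  Real.sqrt_le_iff.2 ⟨dist1_nonneg p q, by
    rw [dist1, add_sq, sq_abs, sq_abs]
    nlinarith [mul_nonneg (abs_nonneg (p.1 - q.1)) (abs_nonneg (p.2 - q.2))]⟩

theorem distInf_le_dist2 (p q : ℝ × ℝ) : distInf p q ≤ dist2 p q :=
  max_le (Real.abs_le_sqrt (le_add_of_nonneg_right (sq_nonneg _)))
    (Real.abs_le_sqrt (le_add_of_nonneg_left (sq_nonneg _)))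

/-! ### Paths of bounded length -/

/-- Some path from `p` to `q` in the θ₄-graph of `P` has Euclidean length at most `c`. -/
def PathWithin (P : Finset (ℝ × ℝ)) (p q : ℝ × ℝ) (c : ℝ) : Prop :=
  ∃ (k : ℕ) (v : ℕ → ℝ × ℝ), IsTheta4Path P k v ∧ v 0 = p ∧ v k = q ∧ pathLength k v ≤ c

namespace PathWithin

theorem mono (h : PathWithin P p q c) (hcd : c ≤ d) : PathWithin P p q d := by
  obtain ⟨k, v, hv, h0, hk, hc⟩ := h
  exact ⟨k, v, hv, h0, hk, hc.trans hcd⟩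

theorem refl (hp : p ∈ P) : PathWithin P p p 0 :=
  ⟨0, fun _ => p, ⟨hp, by simp⟩, rfl, rfl, by simp [pathLength]⟩

theorem cons (hpq : Theta4Adj P p q) (h : PathWithin P q r c) :
    PathWithin P p r (dist2 p q + c) := by
  obtain ⟨k, v, ⟨-, hv⟩, rfl, hk, hc⟩ := h
  refine ⟨k + 1, fun n => Nat.casesOn n p v, ⟨hpq.1, ?_⟩, rfl, hk, ?_⟩
  · rintro (_ | j) hj
    · exact hpq
    · exact hv j (Nat.lt_of_succ_lt_succ hj)
  · rw [pathLength, Finset.sum_range_succ', add_comm]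
    exact add_le_add_right hc _

theorem trans (h₁ : PathWithin P p q c) (h₂ : PathWithin P q r d) :
    PathWithin P p r (c + d) := by
  obtain ⟨k, v, ⟨-, hv⟩, rfl, rfl, hc⟩ := h₁
  suffices PathWithin P (v 0) r (pathLength k v + d) from this.mono (by linarith)
  clear hc
  induction k generalizing v with
  | zero => simpa [pathLength] using h₂
  | succ k ih =>
    have tail := ih (fun j => v (j + 1)) (fun j hj => hv (j + 1) (by omega)) h₂
    refine (tail.cons (hv 0 k.succ_pos)).mono (le_of_eq ?_)
    rw [pathLength, pathLength, Finset.sum_range_succ']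
    ring

theorem of_adj (h : Theta4Adj P p q) : PathWithin P p q (dist1 p q) :=
  ((refl h.2.1).cons h).mono (by linarith [dist2_le_dist1 p q])

end PathWithin

/-! ### Signed coordinates -/

/-- The first coordinate centred at `t`, with its axis reversed if `ε = -1`. -/
def signedFst (t : ℝ × ℝ) (ε : ℤˣ) (p : ℝ × ℝ) : ℝ := ε • (p.1 - t.1)

/-- The second coordinate centred at `t`, with its axis reversed if `δ = -1`. -/
def signedSnd (t : ℝ × ℝ) (δ : ℤˣ) (p : ℝ × ℝ) : ℝ := δ • (p.2 - t.2)

/-- `X`, `Y` are one of the eight coordinate systems obtained from the standard one by moving the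
origin to `t`, reversing axes, and possibly exchanging the two axes. -/
inductive IsFrame (t : ℝ × ℝ) : (ℝ × ℝ → ℝ) → (ℝ × ℝ → ℝ) → Prop
  | signed (ε δ : ℤˣ) : IsFrame t (signedFst t ε) (signedSnd t δ)
  | swap {X Y : ℝ × ℝ → ℝ} : IsFrame t X Y → IsFrame t Y X

theorem abs_units_smul_sub (ε : ℤˣ) (a b c : ℝ) : |ε • (a - c) - ε • (b - c)| = |a - b| := by
  obtain rfl | rfl := Int.units_eq_one_or ε
  · simp
  · simp [Units.neg_smul, abs_sub_comm]

theorem exists_units_smul_neg {a : ℝ} (ha : a ≠ 0) : ∃ ε : ℤˣ, ε • a < 0 :=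
  ha.lt_or_gt.elim (fun h => ⟨1, by simpa⟩) (fun h => ⟨-1, by simpa [Units.neg_smul]⟩)

namespace IsFrame

theorem neg (F : IsFrame t X Y) : IsFrame t (-X) Y ∧ IsFrame t X (-Y) := by
  induction F with
  | signed ε δ =>
    constructor
    · convert signed (-ε) δ using 1
      funext p
      simp [signedFst, Units.neg_smul]
    · convert signed ε (-δ) using 1
      funext p
      simp [signedSnd, Units.neg_smul]
  | swap _ ih => exact ⟨ih.2.swap, ih.1.swap⟩

theorem center (F : IsFrame t X Y) : X t = 0 ∧ Y t = 0 := by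
  induction F with
  | signed ε δ => simp [signedFst, signedSnd]
  | swap _ ih => exact ih.symm

theorem dist1_eq (F : IsFrame t X Y) (p q : ℝ × ℝ) :
    dist1 p q = |X p - X q| + |Y p - Y q| := by
  induction F with
  | signed ε δ => simp only [dist1, signedFst, signedSnd, abs_units_smul_sub]
  | swap _ ih => rw [ih, add_comm]

theorem distInf_eq (F : IsFrame t X Y) (p q : ℝ × ℝ) :
    distInf p q = max |X p - X q| |Y p - Y q| := by
  induction F with
  | signed ε δ => simp only [distInf, signedFst, signedSnd, abs_units_smul_sub]
  | swap _ ih => rw [ih, max_comm]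

theorem exists_cone_iff (F : IsFrame t X Y) :
    ∃ i < 4, ∀ p q, cone i p q ↔ X p < X q ∧ Y p < Y q := by
  induction F with
  | signed ε δ =>
    obtain rfl | rfl := Int.units_eq_one_or ε <;> obtain rfl | rfl := Int.units_eq_one_or δ
    · exact ⟨1, by simp [cone, signedFst, signedSnd]⟩
    · exact ⟨0, by simp [cone, signedFst, signedSnd, Units.neg_smul]⟩
    · exact ⟨2, by simp [cone, signedFst, signedSnd, Units.neg_smul]⟩
    · exact ⟨3, by simp [cone, signedFst, signedSnd, Units.neg_smul]⟩
  | swap _ ih => simpa only [and_comm] using ih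

theorem injOn (F : IsFrame t X Y) (hfst : Set.InjOn Prod.fst (P : Set (ℝ × ℝ)))
    (hsnd : Set.InjOn Prod.snd (P : Set (ℝ × ℝ))) : Set.InjOn X P ∧ Set.InjOn Y P := by
  induction F with
  | signed ε δ =>
    exact ⟨fun p hp q hq h => hfst hp hq (by simpa [signedFst] using h),
      fun p hp q hq h => hsnd hp hq (by simpa [signedSnd] using h)⟩
  | swap _ ih => exact ih.symm

theorem dist1_center (F : IsFrame t X Y) (p : ℝ × ℝ) : dist1 p t = |X p| + |Y p| := by
  rw [F.dist1_eq, F.center.1, F.center.2, sub_zero, sub_zero]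

theorem distInf_center (F : IsFrame t X Y) (p : ℝ × ℝ) : distInf p t = max |X p| |Y p| := by
  rw [F.distInf_eq, F.center.1, F.center.2, sub_zero, sub_zero]

theorem neg_le_distInf (F : IsFrame t X Y) (p : ℝ × ℝ) : -X p ≤ distInf p t := by
  rw [F.distInf_center]
  exact (neg_le_abs _).trans (le_max_left _ _)

theorem dist1_of_neg (F : IsFrame t X Y) (hX : X p < 0) (hY : Y p < 0) :
    dist1 p t = -X p - Y p := by
  rw [F.dist1_center, abs_of_neg hX, abs_of_neg hY, sub_eq_add_neg]

theorem dist1_of_lt (F : IsFrame t X Y) (hX : X p < X q) (hY : Y p < Y q) :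
    dist1 p q = X q + Y q - X p - Y p := by
  rw [F.dist1_eq, abs_of_neg (sub_neg.2 hX), abs_of_neg (sub_neg.2 hY)]
  ring

end IsFrame

/-- `q` is the nearest neighbour of `p` in the cone of `p` on which both `X` and `Y` increase.
On this cone the `L₁`-distance to `p` is `X + Y` up to a constant. -/
structure IsFrameNbr (P : Finset (ℝ × ℝ)) (X Y : ℝ × ℝ → ℝ) (p q : ℝ × ℝ) : Prop where
  mem : q ∈ P
  fst_lt : X p < X q
  snd_lt : Y p < Y q
  add_le : ∀ r ∈ P, X p < X r → Y p < Y r → X q + Y q ≤ X r + Y r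

theorem IsFrameNbr.swap (h : IsFrameNbr P X Y p q) : IsFrameNbr P Y X p q :=
  ⟨h.mem, h.snd_lt, h.fst_lt, fun r hr hY hX => by linarith [h.add_le r hr hX hY]⟩

theorem exists_isFrameNbr (hr : r ∈ P) (hX : X p < X r) (hY : Y p < Y r) :
    ∃ q, IsFrameNbr P X Y p q := by
  obtain ⟨q, hq, hmin⟩ := Finset.exists_min_image {r ∈ P | X p < X r ∧ Y p < Y r}
    (fun r => X r + Y r) ⟨r, by simp [hr, hX, hY]⟩
  simp only [Finset.mem_filter, and_imp] at hq hmin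
  exact ⟨q, hq.1, hq.2.1, hq.2.2, hmin⟩

theorem IsFrame.adj_of_isFrameNbr (F : IsFrame t X Y) (hp : p ∈ P) (hq : IsFrameNbr P X Y p q) :
    Theta4Adj P p q := by
  obtain ⟨i, hi, hcone⟩ := F.exists_cone_iff
  refine ⟨hp, hq.mem, i, hi, .inl ⟨hq.mem, (hcone p q).2 ⟨hq.fst_lt, hq.snd_lt⟩, ?_⟩⟩
  intro r hr hpr
  obtain ⟨hX, hY⟩ := (hcone p r).1 hpr
  rw [F.dist1_of_lt hX hY, F.dist1_of_lt hq.fst_lt hq.snd_lt]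
  linarith [hq.add_le r hr hX hY]

/-! ### Octants -/

/-- `p` lies in the octant `X ≤ Y < 0`, on which `distInf p t` is attained by the coordinate `X`. -/
structure InOctant (X Y : ℝ × ℝ → ℝ) (p : ℝ × ℝ) : Prop where
  fst_le_snd : X p ≤ Y p
  snd_neg : Y p < 0

theorem InOctant.fst_neg (h : InOctant X Y p) : X p < 0 :=
  h.fst_le_snd.trans_lt h.snd_neg

theorem IsFrame.distInf_of_inOctant (F : IsFrame t X Y) (h : InOctant X Y p) :
    distInf p t = -X p := by
  rw [F.distInf_center, abs_of_neg h.fst_neg, abs_of_neg h.snd_neg,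
    max_eq_left (neg_le_neg h.fst_le_snd)]

theorem IsFrame.dist1_of_inOctant (F : IsFrame t X Y) (h : InOctant X Y p) :
    dist1 p t = -X p - Y p :=
  F.dist1_of_neg h.fst_neg h.snd_neg

open Classical in
/-- The largest `L₁`-distance to `t` of a point of `P` in the octant `X ≤ Y < 0` at `L∞`-distance
at most `ρ` from `t`. Adding `t` itself to the points makes the value `0` when there are none. -/
noncomputable def octantNorm (P : Finset (ℝ × ℝ)) (t : ℝ × ℝ) (X Y : ℝ × ℝ → ℝ) (ρ : ℝ) : ℝ :=
  (insert t {p ∈ P | InOctant X Y p ∧ distInf p t ≤ ρ}).sup' (Finset.insert_nonempty _ _)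
    (dist1 · t)

theorem dist1_le_octantNorm (hp : p ∈ P) (hoct : InOctant X Y p) (hρ : distInf p t ≤ ρ) :
    dist1 p t ≤ octantNorm P t X Y ρ :=
  Finset.le_sup' (dist1 · t) (by simp [hp, hoct, hρ])

theorem octantNorm_nonneg (P : Finset (ℝ × ℝ)) (t : ℝ × ℝ) (X Y : ℝ × ℝ → ℝ) (ρ : ℝ) :
    0 ≤ octantNorm P t X Y ρ :=
  (dist1_self t).ge.trans (Finset.le_sup' (dist1 · t) (Finset.mem_insert_self _ _))

theorem octantNorm_le (hc : 0 ≤ c)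
    (h : ∀ p ∈ P, InOctant X Y p → distInf p t ≤ ρ → dist1 p t ≤ c) :
    octantNorm P t X Y ρ ≤ c := by
  refine Finset.sup'_le _ _ fun p hp => ?_
  simp only [Finset.mem_insert, Finset.mem_filter] at hp
  obtain rfl | ⟨hpP, hoct, hρ⟩ := hp
  · rwa [dist1_self]
  · exact h p hpP hoct hρ

theorem octantNorm_mono (P : Finset (ℝ × ℝ)) (t : ℝ × ℝ) (X Y : ℝ × ℝ → ℝ) :
    Monotone (octantNorm P t X Y) := fun _ _ hρ =>
  octantNorm_le (octantNorm_nonneg ..) fun _ hp hoct h => dist1_le_octantNorm hp hoct (h.trans hρ)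

theorem octantNorm_le_two_mul (hρ : 0 ≤ ρ) : octantNorm P t X Y ρ ≤ 2 * ρ :=
  octantNorm_le (by positivity) fun p _ _ hp => by linarith [dist1_le_two_mul_distInf p t]

/-- The sum of `octantNorm` over the two octants of the quadrant `X < 0`, `Y < 0`. -/
noncomputable def quadrantNorm (P : Finset (ℝ × ℝ)) (t : ℝ × ℝ) (X Y : ℝ × ℝ → ℝ) (ρ : ℝ) : ℝ :=
  octantNorm P t X Y ρ + octantNorm P t Y X ρ

theorem quadrantNorm_swap (P : Finset (ℝ × ℝ)) (t : ℝ × ℝ) (X Y : ℝ × ℝ → ℝ) (ρ : ℝ) :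
    quadrantNorm P t Y X ρ = quadrantNorm P t X Y ρ :=
  add_comm _ _

theorem quadrantNorm_nonneg (P : Finset (ℝ × ℝ)) (t : ℝ × ℝ) (X Y : ℝ × ℝ → ℝ) (ρ : ℝ) :
    0 ≤ quadrantNorm P t X Y ρ :=
  add_nonneg (octantNorm_nonneg ..) (octantNorm_nonneg ..)

theorem quadrantNorm_mono (P : Finset (ℝ × ℝ)) (t : ℝ × ℝ) (X Y : ℝ × ℝ → ℝ) :
    Monotone (quadrantNorm P t X Y) :=
  (octantNorm_mono P t X Y).add (octantNorm_mono P t Y X)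

/-! ### Crossing a quadrant -/

/-- Every point of `P` on the octant's side `X ≤ Y` of the diagonal whose `X` exceeds that of `z`
lies in the cone of `z` on which both coordinates increase. -/
def Saturated (P : Finset (ℝ × ℝ)) (X Y : ℝ × ℝ → ℝ) (z : ℝ × ℝ) : Prop :=
  ∀ p ∈ P, X z < X p → X p ≤ Y p → Y z < Y p

theorem saturated_swap_of_le (h : X z ≤ Y z) : Saturated P Y X z :=
  fun _ _ hY hp => (h.trans_lt hY).trans_le hp

theorem exists_saturated_path (F : IsFrame t X Y) (hinj : Set.InjOn Y (P : Set (ℝ × ℝ)))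
    (hw : w ∈ P) (hwXY : X w ≤ Y w) :
    ∃ z ∈ P, X z ≤ Y z ∧ X w ≤ X z ∧ Y z ≤ Y w ∧ Saturated P X Y z ∧
      PathWithin P w z (X z - X w + (Y w - Y z)) := by
  induction w, hw using finset_induction_on_lt (fun p => -X p) with | step w hw ih => ?_
  by_cases hsat : Saturated P X Y w
  · exact ⟨w, hw, hwXY, le_rfl, le_rfl, hsat, (PathWithin.refl hw).mono (by linarith)⟩
  simp only [Saturated, not_forall, not_lt] at hsat
  obtain ⟨p, hp, hwpX, hpXY, hpwY⟩ := hsat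
  have hpwY : Y p < Y w :=
    hpwY.lt_of_ne fun h => hwpX.ne (congrArg X (hinj hp hw h)).symm
  obtain ⟨q, hq⟩ := exists_isFrameNbr (Y := -Y) hp hwpX (neg_lt_neg hpwY)
  have hqY : Y q < Y w := neg_lt_neg_iff.1 hq.snd_lt
  have hqXY : X q - Y q ≤ X p - Y p := hq.add_le p hp hwpX (neg_lt_neg hpwY)
  obtain ⟨z, hz, hzXY, hqzX, hzqY, hzsat, hqz⟩ :=
    ih q hq.mem (neg_lt_neg hq.fst_lt) (by linarith)
  refine ⟨z, hz, hzXY, hq.fst_lt.le.trans hqzX, hzqY.trans hqY.le, hzsat, ?_⟩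
  refine ((PathWithin.of_adj (F.neg.2.adj_of_isFrameNbr hw hq)).trans hqz).mono (le_of_eq ?_)
  rw [F.neg.2.dist1_of_lt hq.fst_lt hq.snd_lt, Pi.neg_apply, Pi.neg_apply]
  ring

theorem exists_saturated_path_of_isFrameNbr (F : IsFrame t X Y)
    (hinj : Set.InjOn Y (P : Set (ℝ × ℝ))) (hz : z ∈ P) (hzX : X z < 0) (hzY : Y z < 0)
    (hsat : Saturated P X Y z) (hq : IsFrameNbr P X Y z q) (hqoct : InOctant X Y q) :
    ∃ z' ∈ P, InOctant X Y z' ∧ Saturated P X Y z' ∧ distInf z' t ≤ distInf q t ∧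
      PathWithin P z z' (dist1 z t + 2 * distInf z t - (dist1 z' t + 2 * distInf z' t)) := by
  obtain ⟨z', hz', hz'XY, hqX, hqY, hz'sat, hpath⟩ :=
    exists_saturated_path F hinj hq.mem hqoct.fst_le_snd
  have hz'oct : InOctant X Y z' := ⟨hz'XY, hqY.trans_lt hqoct.snd_neg⟩
  have hzz'X : X z < X z' := hq.fst_lt.trans_le hqX
  have hqz' : X q + Y q ≤ X z' + Y z' := hq.add_le z' hz' hzz'X (hsat z' hz' hzz'X hz'XY)
  refine ⟨z', hz', hz'oct, hz'sat, ?_, ?_⟩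
  · rw [F.distInf_of_inOctant hz'oct, F.distInf_of_inOctant hqoct]
    exact neg_le_neg hqX
  · refine ((PathWithin.of_adj (F.adj_of_isFrameNbr hz hq)).trans hpath).mono ?_
    rw [F.dist1_of_lt hq.fst_lt hq.snd_lt, F.dist1_of_neg hzX hzY, F.dist1_of_inOctant hz'oct,
      F.distInf_of_inOctant hz'oct]
    linarith [F.neg_le_distInf z, hq.fst_lt]

theorem octantNorm_swap_le_of_isFrameNbr (F : IsFrame t X Y) (hzoct : InOctant X Y z)
    (hq : IsFrameNbr P X Y z q) (hqoct : InOctant Y X q) (hρ : ρ ≤ distInf q t)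
    (hqz : distInf q t ≤ distInf z t) :
    octantNorm P t X Y ρ ≤ octantNorm P t Y X (distInf z t) := by
  refine octantNorm_le (octantNorm_nonneg ..) fun p hp hpoct hpρ => ?_
  refine le_trans ?_ (dist1_le_octantNorm hq.mem hqoct hqz)
  rw [F.distInf_of_inOctant hpoct] at hpρ
  rw [F.swap.distInf_of_inOctant hqoct] at hρ
  have hzp : Y z < X p := by linarith [hq.snd_lt]
  have hqp := hq.add_le p hp (hzoct.fst_le_snd.trans_lt hzp) (hzp.trans_le hpoct.fst_le_snd)
  rw [F.dist1_of_inOctant hpoct, F.swap.dist1_of_inOctant hqoct]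
  linarith

theorem IsFrame.bounds_of_not_in_quadrant (F : IsFrame t X Y) (hzoct : InOctant X Y z)
    (hq : IsFrameNbr P X Y z q) (hqt : X q + Y q ≤ 0) (hout : ¬(X q < 0 ∧ Y q < 0)) :
    distInf q t < distInf z t ∧ -(X q + Y q) ≤ distInf q t ∧
      dist1 q t = X q + Y q + 2 * distInf q t := by
  rw [F.distInf_of_inOctant hzoct, F.dist1_center, F.distInf_center]
  have := hq.fst_lt
  have := hq.snd_lt
  have := hzoct.fst_le_snd
  rcases le_or_gt 0 (Y q) with hY | hY
  · rw [abs_of_nonneg hY, abs_of_nonpos (by linarith), max_eq_left (by linarith)]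
    refine ⟨?_, ?_, ?_⟩ <;> linarith
  · have hX : 0 ≤ X q := not_lt.1 fun hX => hout ⟨hX, hY⟩
    rw [abs_of_nonneg hX, abs_of_neg hY, max_eq_right (by linarith)]
    refine ⟨?_, ?_, ?_⟩ <;> linarith

theorem octantNorm_le_of_isFrameNbr (F : IsFrame t X Y) (hzoct : InOctant X Y z)
    (hsat : Saturated P X Y z) (hq : IsFrameNbr P X Y z q) (hqz : distInf q t < distInf z t)
    (hqadd : -(X q + Y q) ≤ distInf q t) :
    octantNorm P t X Y (distInf q t) ≤ distInf q t := by
  refine octantNorm_le (distInf_nonneg q t) fun p hp hpoct hpq => ?_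
  have hzp : X z < X p := by
    rw [← neg_lt_neg_iff, ← F.distInf_of_inOctant hpoct, ← F.distInf_of_inOctant hzoct]
    exact hpq.trans_lt hqz
  rw [F.dist1_of_inOctant hpoct]
  linarith [hq.add_le p hp hzp (hsat p hp hzp hpoct.fst_le_snd)]

theorem exists_path_of_saturated (F : IsFrame t X Y) (hX : Set.InjOn X (P : Set (ℝ × ℝ)))
    (hY : Set.InjOn Y (P : Set (ℝ × ℝ))) (ht : t ∈ P) (hz : z ∈ P) (hzoct : InOctant X Y z)
    (hsat : Saturated P X Y z) :
    ∃ v ∈ P, distInf v t < distInf z t ∧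
      PathWithin P z v (dist1 z t + 2 * distInf z t - (4 * distInf v t - dist1 v t)) ∧
      quadrantNorm P t X Y (distInf v t) ≤ octantNorm P t Y X (distInf z t) + distInf v t := by
  induction z, hz using finset_induction_on_lt (distInf · t) generalizing X Y with
  | step z hz ih => ?_
  have htX : X z < X t := hzoct.fst_neg.trans_eq F.center.1.symm
  have htY : Y z < Y t := hzoct.snd_neg.trans_eq F.center.2.symm
  obtain ⟨q, hq⟩ := exists_isFrameNbr ht htX htY
  by_cases hin : X q < 0 ∧ Y q < 0
  · have hqz : distInf q t < distInf z t := by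
      rw [F.distInf_of_inOctant hzoct, F.distInf_center, abs_of_neg hin.1, abs_of_neg hin.2]
      exact max_lt (neg_lt_neg hq.fst_lt) (neg_lt_neg (hzoct.fst_le_snd.trans_lt hq.snd_lt))
    rcases le_total (X q) (Y q) with hqXY | hqYX
    · have hqoct : InOctant X Y q := ⟨hqXY, hin.2⟩
      obtain ⟨z', hz', hz'oct, hz'sat, hz'q, hpath⟩ := exists_saturated_path_of_isFrameNbr F hY
        hz hzoct.fst_neg hzoct.snd_neg hsat hq hqoct
      have hlt := hz'q.trans_lt hqz
      obtain ⟨v, hv, hvz', hpath', hnorm⟩ := ih z' hz' hlt F hX hY hz'oct hz'sat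
      refine ⟨v, hv, hvz'.trans hlt, (hpath.trans hpath').mono (by linarith), ?_⟩
      linarith [octantNorm_mono P t Y X hlt.le]
    · have hqoct : InOctant Y X q := ⟨hqYX, hin.1⟩
      obtain ⟨z', hz', hz'oct, hz'sat, hz'q, hpath⟩ := exists_saturated_path_of_isFrameNbr F.swap hX
        hz hzoct.snd_neg hzoct.fst_neg (saturated_swap_of_le hzoct.fst_le_snd) hq.swap hqoct
      have hlt := hz'q.trans_lt hqz
      obtain ⟨v, hv, hvz', hpath', hnorm⟩ := ih z' hz' hlt F.swap hY hX hz'oct hz'sat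
      refine ⟨v, hv, hvz'.trans hlt, (hpath.trans hpath').mono (by linarith), ?_⟩
      rw [quadrantNorm_swap] at hnorm
      linarith [octantNorm_swap_le_of_isFrameNbr F hzoct hq hqoct hz'q hqz.le]
  · have hqt : X q + Y q ≤ 0 := by
      simpa [F.center.1, F.center.2] using hq.add_le t ht htX htY
    obtain ⟨hqz, hqadd, hq1⟩ := F.bounds_of_not_in_quadrant hzoct hq hqt hin
    refine ⟨q, hq.mem, hqz, (PathWithin.of_adj (F.adj_of_isFrameNbr hz hq)).mono ?_, ?_⟩
    · rw [F.dist1_of_lt hq.fst_lt hq.snd_lt, F.dist1_of_inOctant hzoct]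
      linarith
    · rw [quadrantNorm, add_comm]
      exact add_le_add (octantNorm_mono P t Y X hqz.le)
        (octantNorm_le_of_isFrameNbr F hzoct hsat hq hqz hqadd)

theorem exists_path_of_inOctant (F : IsFrame t X Y) (hX : Set.InjOn X (P : Set (ℝ × ℝ)))
    (hY : Set.InjOn Y (P : Set (ℝ × ℝ))) (ht : t ∈ P) (hw : w ∈ P) (hwoct : InOctant X Y w) :
    ∃ v ∈ P, distInf v t < distInf w t ∧
      PathWithin P w v (4 * distInf w t - dist1 w t - (4 * distInf v t - dist1 v t) +
        2 * (quadrantNorm P t X Y (distInf w t) - quadrantNorm P t X Y (distInf v t))) := by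
  obtain ⟨z, hz, hzXY, hwzX, hzwY, hzsat, hwz⟩ :=
    exists_saturated_path F hY hw hwoct.fst_le_snd
  have hzoct : InOctant X Y z := ⟨hzXY, hzwY.trans_lt hwoct.snd_neg⟩
  obtain ⟨v, hv, hvz, hzv, hnorm⟩ := exists_path_of_saturated F hX hY ht hz hzoct hzsat
  have hzw : distInf z t ≤ distInf w t := by
    rw [F.distInf_of_inOctant hzoct, F.distInf_of_inOctant hwoct]
    exact neg_le_neg hwzX
  refine ⟨v, hv, hvz.trans_le hzw, (hwz.trans hzv).mono ?_⟩
  have hgain : dist1 z t - distInf v t ≤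
      quadrantNorm P t X Y (distInf w t) - quadrantNorm P t X Y (distInf v t) := by
    simp only [quadrantNorm] at hnorm ⊢
    linarith [dist1_le_octantNorm hz hzoct hzw, octantNorm_mono P t Y X hzw]
  linarith [F.dist1_of_inOctant hwoct, F.distInf_of_inOctant hwoct,
    F.dist1_of_inOctant hzoct, F.distInf_of_inOctant hzoct]

/-! ### Descending to the target -/

/-- The sum of `octantNorm` over the eight octants around `t`. -/
noncomputable def totalNorm (P : Finset (ℝ × ℝ)) (t : ℝ × ℝ) (ρ : ℝ) : ℝ :=
  ∑ e : ℤˣ × ℤˣ, quadrantNorm P t (signedFst t e.1) (signedSnd t e.2) ρ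

theorem totalNorm_nonneg (P : Finset (ℝ × ℝ)) (t : ℝ × ℝ) (ρ : ℝ) : 0 ≤ totalNorm P t ρ :=
  Finset.sum_nonneg fun _ _ => quadrantNorm_nonneg ..

theorem totalNorm_le (hρ : 0 ≤ ρ) : totalNorm P t ρ ≤ 16 * ρ := by
  have hquad (e : ℤˣ × ℤˣ) :
      quadrantNorm P t (signedFst t e.1) (signedSnd t e.2) ρ ≤ 2 * ρ + 2 * ρ :=
    add_le_add (octantNorm_le_two_mul hρ) (octantNorm_le_two_mul hρ)
  refine (Finset.sum_le_card_nsmul Finset.univ _ _ fun e _ => hquad e).trans_eq ?_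
  rw [Finset.card_univ, Fintype.card_prod, Fintype.card_units_int, nsmul_eq_mul]
  ring

theorem quadrantNorm_sub_le_totalNorm_sub (e : ℤˣ × ℤˣ) (hcd : c ≤ d) :
    quadrantNorm P t (signedFst t e.1) (signedSnd t e.2) d -
      quadrantNorm P t (signedFst t e.1) (signedSnd t e.2) c ≤
    totalNorm P t d - totalNorm P t c := by
  rw [totalNorm, totalNorm, ← Finset.sum_sub_distrib]
  exact Finset.single_le_sum
    (fun e' _ => sub_nonneg.2 (quadrantNorm_mono P t (signedFst t e'.1) (signedSnd t e'.2) hcd))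
    (Finset.mem_univ e)

theorem exists_inOctant (hfst : w.1 ≠ t.1) (hsnd : w.2 ≠ t.2) :
    ∃ ε δ : ℤˣ, InOctant (signedFst t ε) (signedSnd t δ) w ∨
      InOctant (signedSnd t δ) (signedFst t ε) w := by
  obtain ⟨ε, hε⟩ := exists_units_smul_neg (sub_ne_zero.2 hfst)
  obtain ⟨δ, hδ⟩ := exists_units_smul_neg (sub_ne_zero.2 hsnd)
  exact ⟨ε, δ, (le_total _ _).imp (⟨·, hδ⟩) (⟨·, hε⟩)⟩

section Spanner

variable (hfst : Set.InjOn Prod.fst (P : Set (ℝ × ℝ)))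
  (hsnd : Set.InjOn Prod.snd (P : Set (ℝ × ℝ)))
include hfst hsnd

theorem exists_path_of_ne (ht : t ∈ P) (hw : w ∈ P) (hwt : w ≠ t) :
    ∃ v ∈ P, distInf v t < distInf w t ∧
      PathWithin P w v (4 * distInf w t - dist1 w t - (4 * distInf v t - dist1 v t) +
        2 * (totalNorm P t (distInf w t) - totalNorm P t (distInf v t))) := by
  obtain ⟨ε, δ, hoct⟩ := exists_inOctant (hfst.ne hw ht hwt) (hsnd.ne hw ht hwt)
  have F := IsFrame.signed (t := t) ε δ
  obtain ⟨hX, hY⟩ := F.injOn hfst hsnd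
  suffices ∃ v ∈ P, distInf v t < distInf w t ∧
      PathWithin P w v (4 * distInf w t - dist1 w t - (4 * distInf v t - dist1 v t) +
        2 * (quadrantNorm P t (signedFst t ε) (signedSnd t δ) (distInf w t) -
          quadrantNorm P t (signedFst t ε) (signedSnd t δ) (distInf v t))) by
    obtain ⟨v, hv, hvw, hpath⟩ := this
    refine ⟨v, hv, hvw, hpath.mono ?_⟩
    linarith [quadrantNorm_sub_le_totalNorm_sub (P := P) (t := t) (ε, δ) hvw.le]
  rcases hoct with hoct | hoct
  · exact exists_path_of_inOctant F hX hY ht hw hoct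
  · simpa only [quadrantNorm_swap] using exists_path_of_inOctant F.swap hY hX ht hw hoct

theorem pathWithin_potential (ht : t ∈ P) (hs : s ∈ P) :
    PathWithin P s t (4 * distInf s t - dist1 s t + 2 * totalNorm P t (distInf s t)) := by
  induction s, hs using finset_induction_on_lt (distInf · t) with | step s hs ih => ?_
  obtain rfl | hst := eq_or_ne s t
  · refine (PathWithin.refl ht).mono ?_
    linarith [distInf_self s, dist1_self s, totalNorm_nonneg P s (distInf s s)]
  · obtain ⟨v, hv, hvs, hpath⟩ := exists_path_of_ne hfst hsnd ht hs hst
    exact (hpath.trans (ih v hv hvs)).mono (by linarith)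

end Spanner

theorem theta4_is_spanner_general (P : Finset (ℝ × ℝ))
    (hfst : Set.InjOn Prod.fst (P : Set (ℝ × ℝ))) (hsnd : Set.InjOn Prod.snd (P : Set (ℝ × ℝ))) :
    ∀ s ∈ P, ∀ t ∈ P, ∃ (k : ℕ) (v : ℕ → ℝ × ℝ),
      IsTheta4Path P k v ∧ v 0 = s ∧ v k = t ∧ pathLength k v ≤ 35 * distInf s t := by
  intro s hs t ht
  refine (pathWithin_potential hfst hsnd ht hs).mono ?_
  linarith [totalNorm_le (P := P) (t := t) (distInf_nonneg s t), distInf_le_dist1 s t]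

theorem GenPos.injOn_fst (hP : GenPos P) : Set.InjOn Prod.fst (P : Set (ℝ × ℝ)) :=
  fun p hp q hq h => not_imp_not.1 (fun hne => (hP p hp q hq hne).1) h

theorem GenPos.injOn_snd (hP : GenPos P) : Set.InjOn Prod.snd (P : Set (ℝ × ℝ)) :=
  fun p hp q hq h => not_imp_not.1 (fun hne => (hP p hp q hq hne).2.1) h

theorem thirtyFive_le_stretchFactor :
    35 ≤ (1 + Real.sqrt 2) * (Real.sqrt 2 + 36) * Real.sqrt (4 + 2 * Real.sqrt 2) := by
  have h₁ : 35 ≤ (1 + √2) * (√2 + 36) := by nlinarith [Real.sqrt_nonneg 2]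
  have h₂ : 1 ≤ √(4 + 2 * √2) := Real.one_le_sqrt.2 (by linarith [Real.sqrt_nonneg 2])
  exact h₁.trans (le_mul_of_one_le_right (by positivity) h₂)

/-- The θ₄-graph of a finite point set in general position is a spanner with stretch factor
at most `(1+√2)·(√2+36)·√(4+2√2)`. -/
theorem theta4_is_spanner (P : Finset (ℝ × ℝ)) (hP : GenPos P) :
    ∀ s ∈ P, ∀ t ∈ P, ∃ (k : ℕ) (v : ℕ → ℝ × ℝ),
      IsTheta4Path P k v ∧ v 0 = s ∧ v k = t ∧
      pathLength k v ≤
        (1 + Real.sqrt 2) * (Real.sqrt 2 + 36) * Real.sqrt (4 + 2 * Real.sqrt 2) *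
          dist2 s t := by
  intro s hs t ht
  obtain ⟨k, v, hv, h0, hk, hlen⟩ :=
    theta4_is_spanner_general P hP.injOn_fst hP.injOn_snd s hs t ht
  exact ⟨k, v, hv, h0, hk, hlen.trans (mul_le_mul thirtyFive_le_stretchFactor
    (distInf_le_dist2 s t) (distInf_nonneg s t) (by positivity))⟩
end

section
/- The stretch factor of the θ₄-graph is at least 7: for every ε > 0 there exist a finite set P of points in the plane in general position and two points u, w ∈ P such that every path from u to w in the θ₄-graph of P has length at least (7 − ε)·‖u−w‖₂. -/
open scoped BigOperators

/-!
Place all points at integer positions and perturb them infinitesimally. The perturbation decides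
which neighbours are chosen, but edge lengths are read off in the limit, between the integer
positions. In the configuration below the limiting graph is a long detour: `u = (0, 0)` and
`w = (0, 1)` are at distance `1`, but every path between them has limiting length at least `7`.
The bound is witnessed by a potential (the graph distance from `u` in the limit) that changes along
each edge by at most the limiting length of that edge.

An infinitesimally perturbed coordinate is the germ at `δ → 0⁺` of `b + δ s`, and germs of this form
are ordered lexicographically by `(b, s)`. Hence general position and nearest neighbours for all
small `δ` are decided by a finite computation in `ℤ ×ₗ ℤ`.
-/

open Filter Finset Topology

open Function (Injective extend comp_apply)

theorem dist2_comm (p q : ℝ × ℝ) : dist2 p q = dist2 q p := by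
  simp only [dist2, sub_sq_comm]

theorem sub_le_pathLength {P : Finset (ℝ × ℝ)} {ψ : ℝ × ℝ → ℝ}
    (hψ : ∀ p q, Theta4Adj P p q → ψ q - ψ p ≤ dist2 p q) {k : ℕ} {v : ℕ → ℝ × ℝ}
    (hv : IsTheta4Path P k v) : ψ (v k) - ψ (v 0) ≤ pathLength k v := by
  rw [← sum_range_sub (fun j => ψ (v j)), pathLength]
  exact sum_le_sum fun j hj => hψ _ _ (hv.2 j (mem_range.1 hj))

section OrderedPlane

variable {G ι : Type*}

/-- The quadrants `C_i` in the plane over an arbitrary ordered set of coordinates; on `ℝ × ℝ` this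
is `cone`. -/
def Quadrant [LT G] (i : ℕ) (p q : G × G) : Prop :=
  if i = 0 then p.1 < q.1 ∧ q.2 < p.2
  else if i = 1 then p.1 < q.1 ∧ p.2 < q.2
  else if i = 2 then q.1 < p.1 ∧ p.2 < q.2
  else q.1 < p.1 ∧ q.2 < p.2

instance [LT G] [DecidableLT G] (i : ℕ) (p q : G × G) : Decidable (Quadrant i p q) := by
  unfold Quadrant; infer_instance

/-- The `L₁`-distance in the plane over an ordered group of coordinates; on `ℝ × ℝ` this is
`dist1`. -/
def l1Dist [Lattice G] [AddGroup G] (p q : G × G) : G :=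
  |p.1 - q.1| + |p.2 - q.2|

/-- `IsNearest i x a b` says that `x b` is the `i`-th neighbour `n_i (x a)` within the family `x`
(compare `IsNbr`). -/
def IsNearest [Lattice G] [AddGroup G] (i : ℕ) (x : ι → G × G) (a b : ι) : Prop :=
  Quadrant i (x a) (x b) ∧ ∀ c, Quadrant i (x a) (x c) → l1Dist (x a) (x b) ≤ l1Dist (x a) (x c)

instance [Lattice G] [AddGroup G] [DecidableLT G] [DecidableLE G] [Fintype ι] (i : ℕ)
    (x : ι → G × G) (a b : ι) : Decidable (IsNearest i x a b) := by
  unfold IsNearest; infer_instance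

/-- General position of an indexed family: distinct members lie on distinct vertical lines,
horizontal lines and lines of slope `±1` (compare `GenPos`). -/
def InGeneralPosition [AddGroup G] (x : ι → G × G) : Prop :=
  Injective (fun a => (x a).1) ∧ Injective (fun a => (x a).2) ∧
    Injective (fun a => (x a).2 - (x a).1) ∧ Injective (fun a => (x a).2 + (x a).1)

instance [AddGroup G] [DecidableEq G] [Fintype ι] [DecidableEq ι] (x : ι → G × G) :
    Decidable (InGeneralPosition x) := by
  unfold InGeneralPosition; infer_instance

theorem InGeneralPosition.injective [AddGroup G] {x : ι → G × G} (hx : InGeneralPosition x) :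
    Injective x :=
  Function.Injective.of_comp (f := Prod.fst) hx.1

variable [Fintype ι] {x : ι → ℝ × ℝ} {a b : ι}

theorem InGeneralPosition.genPos (hx : InGeneralPosition x) : GenPos (univ.image x) := by
  simp only [GenPos, mem_image, mem_univ, true_and]
  rintro _ ⟨a, rfl⟩ _ ⟨b, rfl⟩ hab
  have hne : a ≠ b := ne_of_apply_ne x hab
  exact ⟨hx.1.ne hne, hx.2.1.ne hne, hx.2.2.1.ne hne, hx.2.2.2.ne hne⟩

theorem IsNbr.isNearest {i : ℕ} (h : IsNbr (univ.image x) i (x a) (x b)) : IsNearest i x a b :=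
  ⟨h.2.1, fun c => h.2.2 (x c) (mem_image_of_mem x (mem_univ c))⟩

theorem Theta4Adj.exists_isNearest (h : Theta4Adj (univ.image x) (x a) (x b)) :
    ∃ i < 4, IsNearest i x a b ∨ IsNearest i x b a := by
  obtain ⟨-, -, i, hi, hab⟩ := h
  exact ⟨i, hi, hab.imp IsNbr.isNearest IsNbr.isNearest⟩

end OrderedPlane

/-- The coordinate `b + δ s`, for `δ` a positive infinitesimal, is encoded as the pair `(b, s)`. -/
abbrev PerturbedInt : Type := ℤ ×ₗ ℤ

namespace PerturbedInt

/-- The value `b + δ s` of the perturbed integer `(b, s)` at a real number `δ`. -/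
def eval (δ : ℝ) : PerturbedInt →+ ℝ where
  toFun c := (ofLex c).1 + δ * (ofLex c).2
  map_zero' := by simp
  map_add' c d := by simp only [ofLex_add, Prod.fst_add, Prod.snd_add]; push_cast; ring

theorem eval_apply (δ : ℝ) (c : PerturbedInt) : eval δ c = (ofLex c).1 + δ * (ofLex c).2 :=
  rfl

theorem continuous_eval (c : PerturbedInt) : Continuous fun δ => eval δ c := by
  simp only [eval_apply]
  fun_prop

theorem eventually_eval_pos {c : PerturbedInt} (hc : 0 < c) : ∀ᶠ δ in 𝓝[>] 0, 0 < eval δ c := by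
  obtain hbase | ⟨hbase, hshift⟩ := Prod.Lex.lt_iff.1 hc
  · have hzero : 0 < eval 0 c := by simpa [eval_apply] using hbase
    exact nhdsWithin_le_nhds ((continuous_eval c).continuousAt.eventually_const_lt hzero)
  · filter_upwards [self_mem_nhdsWithin] with δ hδ
    simpa [eval_apply, ← hbase] using mul_pos hδ (Int.cast_pos.2 hshift)

theorem eventually_eval_lt {c d : PerturbedInt} (h : c < d) :
    ∀ᶠ δ in 𝓝[>] 0, eval δ c < eval δ d := by
  simpa only [map_sub, sub_pos] using eventually_eval_pos (sub_pos.2 h)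

theorem eventually_eval_lt_iff (c d : PerturbedInt) :
    ∀ᶠ δ in 𝓝[>] 0, (eval δ c < eval δ d ↔ c < d) := by
  rcases lt_trichotomy c d with h | rfl | h
  · filter_upwards [eventually_eval_lt h] with δ hδ using iff_of_true hδ h
  · simp
  · filter_upwards [eventually_eval_lt h] with δ hδ using iff_of_false hδ.not_gt h.not_gt

theorem eventually_eval_abs (c : PerturbedInt) : ∀ᶠ δ in 𝓝[>] 0, eval δ |c| = |eval δ c| := by
  filter_upwards [eventually_eval_lt_iff c 0] with δ hδ
  rw [map_zero] at hδ
  rcases lt_or_ge c 0 with hc | hc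
  · rw [abs_of_neg hc, abs_of_neg (hδ.2 hc), map_neg]
  · rw [abs_of_nonneg hc, abs_of_nonneg (not_lt.1 (mt hδ.1 hc.not_gt))]

theorem eventually_injective_eval {ι : Type*} [Finite ι] {f : ι → PerturbedInt}
    (hf : Injective f) : ∀ᶠ δ in 𝓝[>] 0, Injective fun a => eval δ (f a) := by
  have hlt : ∀ᶠ δ in 𝓝[>] 0, ∀ a b, eval δ (f a) < eval δ (f b) ↔ f a < f b :=
    eventually_all.2 fun a => eventually_all.2 fun b => eventually_eval_lt_iff (f a) (f b)
  filter_upwards [hlt] with δ hδ a b hab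
  have hle : f a ≤ f b := not_lt.1 (mt (hδ b a).2 hab.not_gt)
  exact hf (eq_of_le_of_not_lt hle (mt (hδ a b).2 hab.not_lt))

/-- The point of the real plane obtained from a perturbed lattice point by giving the infinitesimal
the value `δ`; its unperturbed position is `realize 0 p`. -/
def realize (δ : ℝ) (p : PerturbedInt × PerturbedInt) : ℝ × ℝ :=
  (eval δ p.1, eval δ p.2)

theorem eventually_l1Dist_realize (p q : PerturbedInt × PerturbedInt) :
    ∀ᶠ δ in 𝓝[>] 0, l1Dist (realize δ p) (realize δ q) = eval δ (l1Dist p q) := by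
  filter_upwards [eventually_eval_abs (p.1 - q.1), eventually_eval_abs (p.2 - q.2)] with δ h₁ h₂
  simp only [l1Dist, realize, map_add, h₁, h₂, map_sub]

theorem eventually_quadrant_realize_iff (p q : PerturbedInt × PerturbedInt) :
    ∀ᶠ δ in 𝓝[>] 0, ∀ i, Quadrant i (realize δ p) (realize δ q) ↔ Quadrant i p q := by
  filter_upwards [eventually_eval_lt_iff p.1 q.1, eventually_eval_lt_iff q.1 p.1,
    eventually_eval_lt_iff p.2 q.2, eventually_eval_lt_iff q.2 p.2] with δ h₁ h₂ h₃ h₄ i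
  simp only [Quadrant, realize, h₁, h₂, h₃, h₄]

theorem tendsto_dist2_realize (p q : PerturbedInt × PerturbedInt) :
    Tendsto (fun δ => dist2 (realize δ p) (realize δ q)) (𝓝[>] 0)
      (𝓝 (dist2 (realize 0 p) (realize 0 q))) := by
  have hcont : Continuous fun δ => dist2 (realize δ p) (realize δ q) := by
    have := continuous_eval
    simp only [dist2, realize]
    fun_prop
  exact hcont.continuousAt.tendsto.mono_left nhdsWithin_le_nhds

theorem eventually_mul_le_dist2_realize {m c : ℝ} {p q : PerturbedInt × PerturbedInt}
    (hm : m ≤ dist2 (realize 0 p) (realize 0 q)) (hc₀ : 0 ≤ c) (hc₁ : c < 1) :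
    ∀ᶠ δ in 𝓝[>] 0, c * m ≤ dist2 (realize δ p) (realize δ q) := by
  rcases le_or_gt m 0 with hneg | hpos
  · exact .of_forall fun δ =>
      (mul_nonpos_of_nonneg_of_nonpos hc₀ hneg).trans (Real.sqrt_nonneg _)
  · have hlt := (mul_lt_of_lt_one_left hpos hc₁).trans_le hm
    exact ((tendsto_dist2_realize p q).eventually_const_lt hlt).mono fun δ => le_of_lt

theorem abs_le_dist2_realize_zero {m : ℤ} {p q : PerturbedInt × PerturbedInt}
    (h : m ^ 2 ≤ ((ofLex p.1).1 - (ofLex q.1).1) ^ 2 + ((ofLex p.2).1 - (ofLex q.2).1) ^ 2) :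
    |(m : ℝ)| ≤ dist2 (realize 0 p) (realize 0 q) := by
  apply Real.abs_le_sqrt
  simp only [realize, eval_apply, zero_mul, add_zero]
  exact_mod_cast h

end PerturbedInt

open PerturbedInt

section LimitPrinciple

variable {ι : Type*} {x : ι → PerturbedInt × PerturbedInt}

theorem InGeneralPosition.eventually_realize [Finite ι] (hx : InGeneralPosition x) :
    ∀ᶠ δ in 𝓝[>] 0, InGeneralPosition (realize δ ∘ x) := by
  filter_upwards [eventually_injective_eval hx.1, eventually_injective_eval hx.2.1,
    eventually_injective_eval hx.2.2.1, eventually_injective_eval hx.2.2.2] with δ h₁ h₂ h₃ h₄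
  simp only [map_sub, map_add] at h₃ h₄
  exact ⟨h₁, h₂, h₃, h₄⟩

theorem eventually_isNearest_of_realize [Finite ι] (x : ι → PerturbedInt × PerturbedInt) :
    ∀ᶠ δ in 𝓝[>] 0, ∀ i a b, IsNearest i (realize δ ∘ x) a b → IsNearest i x a b := by
  have hquadrant : ∀ᶠ δ in 𝓝[>] 0, ∀ a b i,
      Quadrant i (realize δ (x a)) (realize δ (x b)) ↔ Quadrant i (x a) (x b) :=
    eventually_all.2 fun a => eventually_all.2 fun b => eventually_quadrant_realize_iff _ _
  have hdist : ∀ᶠ δ in 𝓝[>] 0, ∀ a b,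
      l1Dist (realize δ (x a)) (realize δ (x b)) = eval δ (l1Dist (x a) (x b)) :=
    eventually_all.2 fun a => eventually_all.2 fun b => eventually_l1Dist_realize _ _
  have hlt : ∀ᶠ δ in 𝓝[>] 0, ∀ a b c,
      eval δ (l1Dist (x a) (x c)) < eval δ (l1Dist (x a) (x b)) ↔
        l1Dist (x a) (x c) < l1Dist (x a) (x b) :=
    eventually_all.2 fun a => eventually_all.2 fun b => eventually_all.2 fun c =>
      eventually_eval_lt_iff _ _
  filter_upwards [hquadrant, hdist, hlt] with δ hquadrant hdist hlt i a b ⟨hb, hmin⟩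
  refine ⟨(hquadrant a b i).1 hb, fun c hc => not_lt.1 fun hcb => ?_⟩
  have hle := hmin c ((hquadrant a c i).2 hc)
  simp only [comp_apply, hdist] at hle
  exact hle.not_gt ((hlt a b c).2 hcb)

variable [Fintype ι] {φ : ι → ℝ}

theorem eventually_mul_sub_le_pathLength (hx : InGeneralPosition x)
    (hφ : ∀ i < 4, ∀ a b, IsNearest i x a b →
      |φ a - φ b| ≤ dist2 (realize 0 (x a)) (realize 0 (x b)))
    {c : ℝ} (hc₀ : 0 ≤ c) (hc₁ : c < 1) (u w : ι) :
    ∀ᶠ δ in 𝓝[>] 0, ∀ k v, IsTheta4Path (univ.image (realize δ ∘ x)) k v →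
      v 0 = realize δ (x u) → v k = realize δ (x w) → c * (φ w - φ u) ≤ pathLength k v := by
  have hlip : ∀ᶠ δ in 𝓝[>] 0, ∀ a b, |φ a - φ b| ≤ dist2 (realize 0 (x a)) (realize 0 (x b)) →
      c * |φ a - φ b| ≤ dist2 (realize δ (x a)) (realize δ (x b)) :=
    eventually_all.2 fun a => eventually_all.2 fun b => eventually_imp_distrib_left.2 fun hab =>
      eventually_mul_le_dist2_realize hab hc₀ hc₁
  filter_upwards [hx.eventually_realize, eventually_isNearest_of_realize x, hlip]
    with δ hgen hnearest hlip k v hv hu hw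
  let ψ : ℝ × ℝ → ℝ := extend (realize δ ∘ x) (fun a => c * φ a) 0
  have hψ (a : ι) : ψ (realize δ (x a)) = c * φ a := hgen.injective.extend_apply _ _ a
  have hedge (p q : ℝ × ℝ) (hpq : Theta4Adj (univ.image (realize δ ∘ x)) p q) :
      ψ q - ψ p ≤ dist2 p q := by
    obtain ⟨a, -, rfl⟩ := mem_image.1 hpq.1
    obtain ⟨b, -, rfl⟩ := mem_image.1 hpq.2.1
    have habs : c * |φ a - φ b| ≤ dist2 (realize δ (x a)) (realize δ (x b)) := by
      obtain ⟨i, hi, hab | hba⟩ := hpq.exists_isNearest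
      · exact hlip a b (hφ i hi a b (hnearest i a b hab))
      · rw [abs_sub_comm, dist2_comm]
        exact hlip b a (hφ i hi b a (hnearest i b a hba))
    rw [comp_apply, comp_apply, hψ, hψ, ← mul_sub]
    exact (mul_le_mul_of_nonneg_left (abs_sub_comm (φ a) (φ b) ▸ le_abs_self _) hc₀).trans habs
  simpa only [hu, hw, hψ, ← mul_sub] using sub_le_pathLength hedge hv

theorem eventually_mul_dist2_le_pathLength (hx : InGeneralPosition x)
    (hφ : ∀ i < 4, ∀ a b, IsNearest i x a b →
      |φ a - φ b| ≤ dist2 (realize 0 (x a)) (realize 0 (x b)))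
    {u w : ι} {t : ℝ} (ht : t * dist2 (realize 0 (x u)) (realize 0 (x w)) < φ w - φ u) :
    ∀ᶠ δ in 𝓝[>] 0, ∀ k v, IsTheta4Path (univ.image (realize δ ∘ x)) k v →
      v 0 = realize δ (x u) → v k = realize δ (x w) →
        t * dist2 (realize δ (x u)) (realize δ (x w)) ≤ pathLength k v := by
  obtain ⟨c, ⟨hc₀, hc₁⟩, hc⟩ : ∃ c ∈ Set.Ioo 0 1,
      t * dist2 (realize 0 (x u)) (realize 0 (x w)) < c * (φ w - φ u) := by
    have hlim : Tendsto (fun c => c * (φ w - φ u)) (𝓝[<] 1) (𝓝 (φ w - φ u)) := by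
      simpa using ((continuous_mul_const (φ w - φ u)).tendsto 1).mono_left nhdsWithin_le_nhds
    exact (Eventually.and (Ioo_mem_nhdsLT zero_lt_one) (hlim.eventually_const_lt ht)).exists
  filter_upwards [eventually_mul_sub_le_pathLength hx hφ hc₀.le hc₁ u w,
    ((tendsto_dist2_realize (x u) (x w)).const_mul t).eventually_lt_const hc]
    with δ hpath hdist k v hv hu hw
  exact hdist.le.trans (hpath k v hv hu hw)

end LimitPrinciple

section Configuration

/-- The half of the configuration with unperturbed ordinate at most `0`; each coordinate is given
as `toLex (position, shift)`. The shifts were found by a computer search. -/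
def lowerHalf : Fin 12 → PerturbedInt × PerturbedInt :=
  ![(toLex (0, -1), toLex (0, -6)),
    (toLex (1, -4), toLex (0, -7)),
    (toLex (1, 4), toLex (0, -4)),
    (toLex (-2, -2), toLex (0, -1)),
    (toLex (-2, 0), toLex (0, -8)),
    (toLex (-3, 1), toLex (0, 0)),
    (toLex (3, 0), toLex (0, 1)),
    (toLex (-1, -3), toLex (-1, -7)),
    (toLex (1, -3), toLex (-1, -5)),
    (toLex (1, 5), toLex (-1, 1)),
    (toLex (-2, 1), toLex (-1, -6)),
    (toLex (2, 1), toLex (-1, 0))]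

/-- The full configuration: `lowerHalf` and its reflection in the point `(0, 1/2)`. -/
def configuration : Fin 12 ⊕ Fin 12 → PerturbedInt × PerturbedInt :=
  Sum.elim lowerHalf fun a => (-(lowerHalf a).1, toLex (1, 0) - (lowerHalf a).2)

/-- The limiting graph distance from the point `Sum.inl 0` on `lowerHalf`. -/
def lowerPotential : Fin 12 → ℤ :=
  ![0, 1, 1, 2, 2, 3, 3, 4, 2, 2, 3, 3]

/-- The limiting graph distance from the point `Sum.inl 0`; the reflection exchanges the endpoints
`Sum.inl 0` and `Sum.inr 0`, which are `7` apart. -/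
def potential : Fin 12 ⊕ Fin 12 → ℤ :=
  Sum.elim lowerPotential fun a => 7 - lowerPotential a

theorem inGeneralPosition_configuration : InGeneralPosition configuration := by
  decide +kernel

theorem sq_potential_sub_le_of_isNearest : ∀ i < 4, ∀ a b, IsNearest i configuration a b →
    (potential a - potential b) ^ 2 ≤
      ((ofLex (configuration a).1).1 - (ofLex (configuration b).1).1) ^ 2 +
        ((ofLex (configuration a).2).1 - (ofLex (configuration b).2).1) ^ 2 := by
  decide +kernel

theorem abs_potential_sub_le_of_isNearest (i : ℕ) (hi : i < 4) (a b : Fin 12 ⊕ Fin 12)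
    (h : IsNearest i configuration a b) : |(potential a : ℝ) - potential b| ≤
      dist2 (realize 0 (configuration a)) (realize 0 (configuration b)) := by
  exact_mod_cast abs_le_dist2_realize_zero (sq_potential_sub_le_of_isNearest i hi a b h)

theorem dist2_realize_zero_endpoints : dist2 (realize 0 (configuration (Sum.inl 0)))
    (realize 0 (configuration (Sum.inr 0))) = 1 := by
  simp [dist2, realize, eval_apply, configuration, lowerHalf]

theorem potential_endpoints : potential (Sum.inr 0) - potential (Sum.inl 0) = 7 := rfl

end Configuration

/-- The stretch factor of the θ₄-graph is at least `7`. -/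
theorem theta4_lower_bound (ε : ℝ) (hε : 0 < ε) :
    ∃ P : Finset (ℝ × ℝ), GenPos P ∧
      ∃ u ∈ P, ∃ w ∈ P, u ≠ w ∧
        ∀ (k : ℕ) (v : ℕ → ℝ × ℝ), IsTheta4Path P k v → v 0 = u → v k = w →
          (7 - ε) * dist2 u w ≤ pathLength k v := by
  have hpot : (potential (Sum.inr 0) : ℝ) - potential (Sum.inl 0) = 7 := by
    exact_mod_cast potential_endpoints
  have hlimit : (7 - ε) * dist2 (realize 0 (configuration (Sum.inl 0)))
      (realize 0 (configuration (Sum.inr 0))) <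
        (potential (Sum.inr 0) : ℝ) - potential (Sum.inl 0) := by
    rw [dist2_realize_zero_endpoints, hpot]
    linarith
  obtain ⟨δ, hgen, hpath⟩ := (inGeneralPosition_configuration.eventually_realize.and
    (eventually_mul_dist2_le_pathLength (φ := fun a => potential a) inGeneralPosition_configuration
      abs_potential_sub_le_of_isNearest hlimit)).exists
  exact ⟨univ.image (realize δ ∘ configuration), hgen.genPos,
    _, mem_image_of_mem _ (mem_univ (Sum.inl 0)), _, mem_image_of_mem _ (mem_univ (Sum.inr 0)),
    hgen.injective.ne Sum.inl_ne_inr, hpath⟩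
end
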